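/- Let H be a real Hilbert space, X a set, and Φ : X → H a feature map with kernel K_mis(x,y) = ⟨Φ(x), Φ(y)⟩ (a possibly misspecified kernel). Let the quadrature rule π_KQ be given by points x_1,…,x_n ∈ X with nonnegative weights w_1,…,w_n summing to 1, and let the empirical measure π̃ be given by points y_1,…,y_N ∈ X with nonnegative weights u_1,…,u_N summing to 1. Let f : X → ℝ be any function (not necessarily in the RKHS of K_mis), let g ∈ H, and set f̃(x) = ⟨g, Φ(x)⟩. If |f(x) − f̃(x)| ≤ ε for all x ∈ X, then | Σ_{i=1}^n w_i f(x_i) − Σ_{j=1}^N u_j f(y_j) | ≤ 2 ε + ‖g‖ · ‖ Σ_{i=1}^n w_i Φ(x_i) − Σ_{j=1}^N u_j Φ(y_j) ‖, where the last factor is the worst-case quadrature error of π_KQ against π̃ over the unit ball of the RKHS of K_mis. (In general, with signed weights, the factor 2 is replaced by Σ_i |w_i| + Σ_j |u_j|, the sum of the total variations of the two measures.) -/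

import Mathlib

open scoped RealInnerProductSpace

/-!
Replacing `f` by `f̃ = ⟪g, Φ(·)⟫` changes each of the two sums by at most `ε` times the total
variation of its weights. For `f̃` itself the two sums are the inner products of `g` with the mean
embeddings, so Cauchy–Schwarz bounds their difference.
-/

section

variable {𝕜 H ι κ X : Type*} [RCLike 𝕜]

theorem norm_sum_mul_le_sum_norm_mul {R : Type*} [NonUnitalSeminormedRing R] (s : Finset ι)
    (w a : ι → R) {ε : ℝ} (ha : ∀ i ∈ s, ‖a i‖ ≤ ε) :
    ‖∑ i ∈ s, w i * a i‖ ≤ (∑ i ∈ s, ‖w i‖) * ε := by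
  rw [Finset.sum_mul]
  exact norm_sum_le_of_le s fun i hi ↦ norm_mul_le_of_le le_rfl (ha i hi)

variable [SeminormedAddCommGroup H] [InnerProductSpace 𝕜 H]

theorem inner_sum_smul_right (s : Finset ι) (g : H) (w : ι → 𝕜) (φ : ι → H) :
    inner 𝕜 g (∑ i ∈ s, w i • φ i) = ∑ i ∈ s, w i * inner 𝕜 g (φ i) := by
  simp only [inner_sum, inner_smul_right]

theorem norm_sum_mul_sub_inner_sum_smul_le (s : Finset ι) (w a : ι → 𝕜) (φ : ι → H) (g : H)
    {ε : ℝ} (hclose : ∀ i ∈ s, ‖a i - inner 𝕜 g (φ i)‖ ≤ ε) :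
    ‖∑ i ∈ s, w i * a i - inner 𝕜 g (∑ i ∈ s, w i • φ i)‖ ≤ (∑ i ∈ s, ‖w i‖) * ε := by
  simp_rw [inner_sum_smul_right, ← Finset.sum_sub_distrib, ← mul_sub]
  exact norm_sum_mul_le_sum_norm_mul s w _ hclose

theorem stmt_8_general (Φ : X → H) (s : Finset ι) (t : Finset κ)
    (x : ι → X) (w : ι → 𝕜) (y : κ → X) (u : κ → 𝕜) (f : X → 𝕜) (g : H) (ε : ℝ)
    (hx : ∀ i ∈ s, ‖f (x i) - inner 𝕜 g (Φ (x i))‖ ≤ ε)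
    (hy : ∀ j ∈ t, ‖f (y j) - inner 𝕜 g (Φ (y j))‖ ≤ ε) :
    ‖∑ i ∈ s, w i * f (x i) - ∑ j ∈ t, u j * f (y j)‖
      ≤ (∑ i ∈ s, ‖w i‖ + ∑ j ∈ t, ‖u j‖) * ε
        + ‖g‖ * ‖∑ i ∈ s, w i • Φ (x i) - ∑ j ∈ t, u j • Φ (y j)‖ := by
  set Qf := ∑ i ∈ s, w i * f (x i)
  set Pf := ∑ j ∈ t, u j * f (y j)
  set μQ := ∑ i ∈ s, w i • Φ (x i)
  set μP := ∑ j ∈ t, u j • Φ (y j)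
  have hQ : ‖Qf - inner 𝕜 g μQ‖ ≤ (∑ i ∈ s, ‖w i‖) * ε :=
    norm_sum_mul_sub_inner_sum_smul_le s w _ _ g hx
  have hP : ‖Pf - inner 𝕜 g μP‖ ≤ (∑ j ∈ t, ‖u j‖) * ε :=
    norm_sum_mul_sub_inner_sum_smul_le t u _ _ g hy
  calc ‖Qf - Pf‖
      = ‖(Qf - inner 𝕜 g μQ) - (Pf - inner 𝕜 g μP) + inner 𝕜 g (μQ - μP)‖ := by
        rw [inner_sub_right]; congr 1; ring
    _ ≤ ‖Qf - inner 𝕜 g μQ‖ + ‖Pf - inner 𝕜 g μP‖ + ‖inner 𝕜 g (μQ - μP)‖ :=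
        norm_add_le_of_le (norm_sub_le _ _) le_rfl
    _ ≤ (∑ i ∈ s, ‖w i‖) * ε + (∑ j ∈ t, ‖u j‖) * ε + ‖g‖ * ‖μQ - μP‖ := by
        gcongr
        exact norm_inner_le_norm g _
    _ = (∑ i ∈ s, ‖w i‖ + ∑ j ∈ t, ‖u j‖) * ε + ‖g‖ * ‖μQ - μP‖ := by rw [add_mul]

end

/-- Robustness against a misspecified RKHS.  With feature map `Φ`
(of the possibly misspecified kernel `K_mis`), quadrature rule `(w, x)` and empirical
measure `(u, y)` both with convex weights, any function `f` uniformly `ε`-close to an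
RKHS function `f̃ = ⟪g, Φ(·)⟫` satisfies
`|∑ i, w i f(x i) − ∑ j, u j f(y j)| ≤ 2 ε + ‖g‖ ‖∑ i, w i Φ(x i) − ∑ j, u j Φ(y j)‖`. -/
theorem stmt_8
    {H : Type*} [NormedAddCommGroup H] [InnerProductSpace ℝ H]
    {X : Type*} (Φ : X → H)
    {n N : ℕ} (x : Fin n → X) (w : Fin n → ℝ) (y : Fin N → X) (u : Fin N → ℝ)
    (hw : ∀ i, 0 ≤ w i) (hw1 : ∑ i, w i = 1)
    (hu : ∀ j, 0 ≤ u j) (hu1 : ∑ j, u j = 1)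
    (f : X → ℝ) (g : H) (ε : ℝ)
    (hclose : ∀ z : X, |f z - ⟪g, Φ z⟫| ≤ ε) :
    |(∑ i, w i * f (x i)) - ∑ j, u j * f (y j)|
      ≤ 2 * ε + ‖g‖ * ‖(∑ i, w i • Φ (x i)) - ∑ j, u j • Φ (y j)‖ := by
  simpa [abs_of_nonneg, hw, hw1, hu, hu1, one_add_one_eq_two] using
    stmt_8_general Φ Finset.univ Finset.univ x w y u f g ε (fun i _ ↦ hclose (x i))
      fun j _ ↦ hclose (y j)
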